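/- Let S ≥ 1/2 be a half-integer and G = (V,E,w) a finite undirected graph with nonnegative edge weights. Then ((S+1)/S)² · CHA(G) ≤ QHA_S(G) ≤ CHA(G), where QHA_S(G) is the smallest eigenvalue of the spin-S Heisenberg antiferromagnet (1/(2S²)) Σ_{{i,j}∈E} w_ij Σ_{α=1}^3 Ŝ^α_i Ŝ^α_j on (ℂ^d)^{⊗V}, and CHA(G) = min over assignments of unit vectors Ω_i ∈ S² ⊂ ℝ³ to the vertices of (1/2) Σ_{{i,j}∈E} w_ij Ω_i·Ω_j. -/

import Mathlib

open Matrix MeasureTheory Filter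
open scoped BigOperators RealInnerProductSpace Kronecker

noncomputable section

/-- The spin value `S = n/2` for a half-integer spin encoded by `n : ℕ` (`n ≥ 1` means `S ≥ 1/2`). -/
def spinVal (n : ℕ) : ℝ := (n : ℝ) / 2

/-- The raising operator `S⁺` on `ℂ^(n+1)` in the basis `|m⟩`, `m = k − n/2`, `k = 0, …, n`:
`S⁺|m⟩ = √(S(S+1) − m(m+1)) |m+1⟩`. -/
def spinP (n : ℕ) : Matrix (Fin (n+1)) (Fin (n+1)) ℂ :=
  fun j k => if (j : ℕ) = (k : ℕ) + 1
    then (Real.sqrt (spinVal n * (spinVal n + 1)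
      - ((k : ℝ) - spinVal n) * (((k : ℝ) - spinVal n) + 1)) : ℂ)
    else 0

/-- The standard spin-`S` matrices `Ŝ¹, Ŝ², Ŝ³` on `ℂ^(n+1)`, where `S = n/2`:
`Ŝ¹ = (S⁺ + S⁻)/2`, `Ŝ² = (S⁺ − S⁻)/(2i)`, `Ŝ³|m⟩ = m|m⟩`, with `S⁻ = (S⁺)ᴴ`. -/
def spinMat (n : ℕ) : Fin 3 → Matrix (Fin (n+1)) (Fin (n+1)) ℂ :=
  fun α =>
    if α = 0 then (1/2 : ℂ) • (spinP n + (spinP n)ᴴ)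
    else if α = 1 then (1/(2*Complex.I) : ℂ) • (spinP n - (spinP n)ᴴ)
    else Matrix.diagonal (fun k => (((k : ℝ) - spinVal n : ℝ) : ℂ))

/-- The operator `A` acting on tensor factor `i` of `(ℂ^(n+1))^{⊗V}` and as the identity
elsewhere, realized as a matrix indexed by configurations `V → Fin (n+1)`. -/
def siteOp {V : Type*} [Fintype V] [DecidableEq V] (n : ℕ) (i : V)
    (A : Matrix (Fin (n+1)) (Fin (n+1)) ℂ) :
    Matrix (V → Fin (n+1)) (V → Fin (n+1)) ℂ :=
  fun x y => if ∀ j, j ≠ i → x j = y j then A (x i) (y i) else 0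

/-- The Heisenberg coupling `Σ_{α=1}^3 Ŝ^α_i Ŝ^α_j` between sites `i` and `j`. -/
def heis {V : Type*} [Fintype V] [DecidableEq V] (n : ℕ) (i j : V) :
    Matrix (V → Fin (n+1)) (V → Fin (n+1)) ℂ :=
  ∑ α : Fin 3, siteOp n i (spinMat n α) * siteOp n j (spinMat n α)

/-- The largest eigenvalue of a complex matrix (as a real number). -/
def maxEig {m : Type*} [Fintype m] (A : Matrix m m ℂ) : ℝ :=
  sSup {r : ℝ | ∃ v : m → ℂ, v ≠ 0 ∧ A.mulVec v = (r : ℂ) • v}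

/-- The smallest eigenvalue of a complex matrix (as a real number). -/
def minEig {m : Type*} [Fintype m] (A : Matrix m m ℂ) : ℝ :=
  sInf {r : ℝ | ∃ v : m → ℂ, v ≠ 0 ∧ A.mulVec v = (r : ℂ) • v}

/-- The spin-`S` Quantum Max-Cut Hamiltonian
`Ĥ_QMC = (1/2) Σ_{{i,j}∈E} w_ij (𝟙 − (1/S²) Σ_α Ŝ^α_i Ŝ^α_j)`, written as a sum over
ordered pairs of vertices (each unordered edge counted twice, whence the factor `1/4`). -/
def hQMC {V : Type*} [Fintype V] [DecidableEq V] (n : ℕ) (w : V → V → ℝ) :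
    Matrix (V → Fin (n+1)) (V → Fin (n+1)) ℂ :=
  (1/4 : ℂ) • ∑ i, ∑ j, (w i j : ℂ) •
    ((1 : Matrix (V → Fin (n+1)) (V → Fin (n+1)) ℂ)
      - ((1/(spinVal n)^2 : ℝ) : ℂ) • heis n i j)

/-- The value `QMaxCut_S(G)`: the largest eigenvalue of `Ĥ_QMC`. -/
def qMaxCut {V : Type*} [Fintype V] [DecidableEq V] (n : ℕ) (w : V → V → ℝ) : ℝ :=
  maxEig (hQMC n w)

/-- The spin-`S` Heisenberg antiferromagnet `Ĥ_QHA = (1/(2S²)) Σ_{{i,j}∈E} w_ij Σ_α Ŝ^α_i Ŝ^α_j`,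
written as a sum over ordered pairs of vertices (each unordered edge counted twice,
whence the factor `1/(4S²)`). -/
def hQHA {V : Type*} [Fintype V] [DecidableEq V] (n : ℕ) (w : V → V → ℝ) :
    Matrix (V → Fin (n+1)) (V → Fin (n+1)) ℂ :=
  ((1/(4 * (spinVal n)^2) : ℝ) : ℂ) • ∑ i, ∑ j, (w i j : ℂ) • heis n i j

/-- The classical cut energy `(1/2) Σ_{{i,j}∈E} w_ij (1 − u_i·u_j)`, written as a sum over
ordered pairs of vertices (each unordered edge counted twice, whence the factor `1/4`). -/
def cutEnergy {V : Type*} [Fintype V] (w : V → V → ℝ)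
    (u : V → EuclideanSpace ℝ (Fin 3)) : ℝ :=
  (1/4) * ∑ i, ∑ j, w i j * (1 - ⟪u i, u j⟫)

/-- The product-state value `Prod(G)`: the maximum of the cut energy over assignments of
unit vectors in `ℝ³` to the vertices. -/
def prodVal {V : Type*} [Fintype V] (w : V → V → ℝ) : ℝ :=
  sSup {x : ℝ | ∃ Ω : V → EuclideanSpace ℝ (Fin 3), (∀ i, ‖Ω i‖ = 1) ∧ x = cutEnergy w Ω}

/-- The classical Heisenberg energy `(1/2) Σ_{{i,j}∈E} w_ij Ω_i·Ω_j`. -/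
def chaEnergy {V : Type*} [Fintype V] (w : V → V → ℝ)
    (Ω : V → EuclideanSpace ℝ (Fin 3)) : ℝ :=
  (1/4) * ∑ i, ∑ j, w i j * ⟪Ω i, Ω j⟫

/-- The value `CHA(G)` of the classical Heisenberg antiferromagnet. -/
def chaVal {V : Type*} [Fintype V] (w : V → V → ℝ) : ℝ :=
  sInf {x : ℝ | ∃ Ω : V → EuclideanSpace ℝ (Fin 3), (∀ i, ‖Ω i‖ = 1) ∧ x = chaEnergy w Ω}

theorem aux_isCompact_convexHull {E : Type} [NormedAddCommGroup E] [NormedSpace ℝ E]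
    [FiniteDimensional ℝ E] {s : Set E} (hs : IsCompact s) : IsCompact (convexHull ℝ s) := by
  rcases s.eq_empty_or_nonempty with rfl | ⟨s0, hs0⟩
  · simp
  set m := Module.finrank ℝ E + 1 with hm
  have hK : IsCompact ((stdSimplex ℝ (Fin m)) ×ˢ (Set.univ.pi fun _ : Fin m => s)) :=
    (isCompact_stdSimplex ℝ (Fin m)).prod (isCompact_univ_pi fun _ => hs)
  have hc : Continuous fun q : (Fin m → ℝ) × (Fin m → E) => ∑ i, q.1 i • q.2 i := by fun_prop
  convert hK.image hc
  ext x
  constructor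
  · intro hx
    obtain ⟨ι, hι, z, w, hz, hai, hw, hw1, hx⟩ := eq_pos_convex_span_of_mem_convexHull hx
    have hcard : Fintype.card ι ≤ Fintype.card (Fin m) := by
      rw [Fintype.card_fin]
      refine hai.card_le_finrank_succ.trans ?_
      have := Submodule.finrank_le (vectorSpan ℝ (Set.range z))
      omega
    obtain ⟨e⟩ := Function.Embedding.nonempty_of_card_le hcard
    have he := e.injective
    have key : ∀ (F : Type) [AddCommMonoid F] (g : Fin m → F) , (∀ b, b ∉ Set.range e → g b = 0) →
        ∑ b, g b = ∑ i, g (e i) := by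
      intro F _ g hg
      exact (Fintype.sum_of_injective e he _ _ hg (fun _ => rfl)).symm
    refine ⟨(Function.extend e w 0, Function.extend e z (fun _ => s0)), ⟨⟨?_, ?_⟩, ?_⟩, ?_⟩
    · intro b
      by_cases hb : ∃ a, e a = b
      · obtain ⟨a, rfl⟩ := hb
        simp [he.extend_apply, (hw a).le]
      · simp [Function.extend_apply' _ _ _ hb]
    · rw [← hw1]
      dsimp only
      rw [key]
      · simp [he.extend_apply]
      · intro b hb
        rw [Function.extend_apply' _ _ _ hb]; rfl
    · intro b _
      by_cases hb : ∃ a, e a = b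
      · obtain ⟨a, rfl⟩ := hb
        simp only [he.extend_apply]
        exact hz ⟨a, rfl⟩
      · simpa [Function.extend_apply' _ _ _ hb] using hs0
    · dsimp only
      rw [key, ← hx]
      · simp [he.extend_apply]
      · intro b hb
        rw [Function.extend_apply' _ _ _ hb]; simp
  · rintro ⟨⟨a, z⟩, ⟨⟨ha0, ha1⟩, hz⟩, rfl⟩
    exact mem_convexHull_of_exists_fintype a z ha0 ha1 (fun i => hz i trivial) rfl

theorem aux_quad (N : ℕ) : ∃ (ι : Type) (_ : Fintype ι) (p u : ι → ℝ), (∀ i, 0 ≤ p i) ∧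
    (∀ i, 0 ≤ u i ∧ u i ≤ 1) ∧ ∀ j ≤ N, ∑ i, p i * u i ^ j = 1 / ((j : ℝ) + 1) := by
  let f : ℝ → (Fin (N+1) → ℝ) := fun u j => u ^ (j : ℕ)
  have hf : Continuous f := by fun_prop
  let s := f '' Set.Icc 0 1
  have hs : IsCompact s := isCompact_Icc.image hf
  have : IsProbabilityMeasure ((volume : Measure ℝ).restrict (Set.Icc 0 1)) := ⟨by simp⟩
  have hint : Integrable f ((volume : Measure ℝ).restrict (Set.Icc 0 1)) :=
    hf.continuousOn.integrableOn_compact isCompact_Icc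
  have hmem : (∫ x in Set.Icc (0:ℝ) 1, f x) ∈ convexHull ℝ s := by
    refine (convex_convexHull ℝ s).integral_mem (aux_isCompact_convexHull hs).isClosed ?_ hint
    refine (ae_restrict_iff' measurableSet_Icc).2 (Eventually.of_forall fun x hx => ?_)
    exact subset_convexHull ℝ s ⟨x, hx, rfl⟩
  obtain ⟨ι, hι, p, z, hp, hp1, hz, hx⟩ := mem_convexHull_iff_exists_fintype.1 hmem
  choose u hu hz using hz
  refine ⟨ι, hι, p, u, hp, fun i => hu i, fun j hj => ?_⟩
  have h1 := congrFun hx ⟨j, by omega⟩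
  have h2 : (∫ x in Set.Icc (0:ℝ) 1, f x) ⟨j, by omega⟩ = 1 / ((j:ℝ) + 1) := by
    rw [MeasureTheory.eval_integral]
    · simp only [f]
      rw [MeasureTheory.integral_Icc_eq_integral_Ioc, ← intervalIntegral.integral_of_le zero_le_one,
        integral_pow]
      simp
    · exact fun i => hint.eval i
  rw [h2] at h1
  rw [← h1]
  simp [← hz, f]

theorem aux_beta (N : ℕ) {ι : Type} [Fintype ι] (p u : ι → ℝ)
    (h : ∀ j ≤ N, ∑ i, p i * u i ^ j = 1 / ((j : ℝ) + 1)) (b : ℕ) : ∀ a, a + b ≤ N →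
    ∑ i, p i * (u i ^ a * (1 - u i) ^ b) =
      (a.factorial * b.factorial : ℝ) / ((a + b + 1).factorial : ℝ) := by
  induction b with
  | zero =>
    intro a ha
    simp only [pow_zero, mul_one, h a ha, Nat.factorial_zero, Nat.cast_one, add_zero,
      Nat.factorial_succ]
    have := Nat.cast_ne_zero (R := ℝ).2 (Nat.factorial_ne_zero a)
    push_cast
    field_simp
  | succ b ih =>
    intro a ha
    have h1 : ∀ i, p i * (u i ^ a * (1 - u i) ^ (b+1)) = p i * (u i ^ a * (1 - u i) ^ b)
      - p i * (u i ^ (a+1) * (1 - u i) ^ b) := fun i => by ring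
    simp only [h1, Finset.sum_sub_distrib]
    rw [ih a (by omega), ih (a+1) (by omega)]
    rw [show a + 1 + b + 1 = (a + b + 1) + 1 by ring, show a + (b + 1) + 1 = (a + b + 1) + 1 by ring]
    rw [Nat.factorial_succ (a+b+1), Nat.factorial_succ a, Nat.factorial_succ b]
    have := Nat.cast_ne_zero (R := ℝ).2 (Nat.factorial_ne_zero (a+b+1))
    push_cast
    field_simp
    ring

theorem aux_roots (N : ℕ) (hN : N ≠ 0) : ∃ z : Fin N → ℂ, (∀ t, ‖z t‖ = 1) ∧
    ∀ a b, a < N → b < N →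
      ∑ t, (z t) ^ a * (star (z t)) ^ b = if a = b then (N : ℂ) else 0 := by
  obtain ⟨ω, hω⟩ : ∃ ω : ℂ, IsPrimitiveRoot ω N := ⟨_, Complex.isPrimitiveRoot_exp N hN⟩
  have hn1 : ‖ω‖ = 1 := hω.norm'_eq_one hN
  have hstar : star ω * ω = 1 := by
    have := Complex.conj_mul' ω
    rw [hn1] at this
    simpa using this
  refine ⟨fun t => ω ^ (t : ℕ), fun t => by simp [hn1], fun a b ha hb => ?_⟩
  have hx : ∀ t : Fin N, (ω ^ (t:ℕ)) ^ a * (star (ω ^ (t:ℕ))) ^ b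
      = (ω ^ a * (star ω) ^ b) ^ (t:ℕ) := by
    intro t
    rw [star_pow, mul_pow]; ring
  simp only [hx]
  rw [Fin.sum_univ_eq_sum_range (fun t => (ω ^ a * (star ω) ^ b) ^ t) N]
  split_ifs with hab
  · subst hab
    have : ω ^ a * star ω ^ a = 1 := by rw [← mul_pow, mul_comm, hstar, one_pow]
    simp only [this]
    simp
  · have hne : ω ^ a * star ω ^ b ≠ 1 := by
      intro h1
      apply hab
      apply hω.pow_inj ha hb
      calc ω ^ a = (ω ^ a * star ω ^ b) * ω ^ b := by
            rw [mul_assoc, ← mul_pow, hstar]; simp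
        _ = ω ^ b := by rw [h1, one_mul]
    have hN1 : (ω ^ a * star ω ^ b) ^ N = 1 := by
      rw [mul_pow, ← pow_mul, ← pow_mul, mul_comm a, mul_comm b, pow_mul, pow_mul, ← star_pow,
        hω.pow_eq_one]
      simp
    rw [geom_sum_eq hne, hN1]; simp

theorem aux_sqrt1 (n k : ℕ) (hk : k < n) :
    √(n.choose (k+1) : ℝ) * √(((k:ℝ)+1) * ((n:ℝ) - k)) * √(n.choose k : ℝ)
      = (n.choose k : ℝ) * ((n:ℝ) - k) := by
  have h := Nat.choose_succ_right_eq n k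
  have h' : (n.choose (k+1) : ℝ) * ((k:ℝ)+1) = n.choose k * ((n:ℝ) - k) := by
    rw [← Nat.cast_sub hk.le]; exact_mod_cast h
  have hnk : (0:ℝ) ≤ (n:ℝ) - k := by
    have : (k:ℝ) ≤ n := by exact_mod_cast hk.le
    linarith
  rw [← Real.sqrt_mul (by positivity), ← Real.sqrt_mul (by positivity)]
  rw [show (n.choose (k+1) : ℝ) * (((k:ℝ)+1) * ((n:ℝ) - k)) * (n.choose k : ℝ)
    = ((n.choose k : ℝ) * ((n:ℝ) - k))^2 by
      linear_combination ((n:ℝ) - k) * (n.choose k : ℝ) * h']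
  exact Real.sqrt_sq (by positivity)

theorem aux_sqrt2 (n k : ℕ) (hk : k < n) :
    √(n.choose (k+1) : ℝ) * √(n.choose k : ℝ) * ((k:ℝ)+1)
      = (n.choose k : ℝ) * √(((k:ℝ)+1) * ((n:ℝ) - k)) := by
  have h1 := aux_sqrt1 n k hk
  have hnk : (0:ℝ) < (n:ℝ) - k := by
    have : (k:ℝ) < n := by exact_mod_cast hk
    linarith
  have hs := Real.mul_self_sqrt (show (0:ℝ) ≤ ((k:ℝ)+1) * ((n:ℝ) - k) by positivity)
  have hpos : 0 < √(((k:ℝ)+1) * ((n:ℝ) - k)) := Real.sqrt_pos.2 (by positivity)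
  have : (√(n.choose (k+1) : ℝ) * √(n.choose k : ℝ) * ((k:ℝ)+1)) * ((n:ℝ) - k)
      = ((n.choose k : ℝ) * √(((k:ℝ)+1) * ((n:ℝ) - k))) * ((n:ℝ) - k) := by
    linear_combination (-√(n.choose (k+1) : ℝ) * √(n.choose k : ℝ)) * hs
      + √(((k:ℝ)+1) * ((n:ℝ) - k)) * h1
  exact mul_right_cancel₀ hnk.ne' this

theorem aux_spinP (n : ℕ) (j k : Fin (n+1)) : spinP n j k =
    if (j:ℕ) = (k:ℕ) + 1 then ((√(((k:ℝ)+1) * ((n:ℝ) - k)) : ℝ) : ℂ) else 0 := by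
  unfold spinP spinVal
  congr 3
  ring_nf

def coh (n : ℕ) (a b : ℂ) : Fin (n+1) → ℂ :=
  fun k => ((√(n.choose k : ℝ) : ℝ) : ℂ) * (a ^ (k:ℕ) * b ^ (n - (k:ℕ)))

theorem aux_bern0 (n : ℕ) (x y : ℂ) (h : x + y = 1) :
    ∑ k : Fin (n+1), (n.choose k : ℂ) * (x ^ (k:ℕ) * y ^ (n - (k:ℕ))) = 1 := by
  rw [Fin.sum_univ_eq_sum_range (fun k => (n.choose k : ℂ) * (x ^ k * y ^ (n - k))) (n+1)]
  have := add_pow x y n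
  rw [h, one_pow] at this
  rw [this]
  exact Finset.sum_congr rfl fun k _ => by ring

theorem aux_bern1 (n : ℕ) (x y : ℂ) (h : x + y = 1) :
    ∑ k : Fin (n+1), (k:ℂ) * ((n.choose k : ℂ) * (x ^ (k:ℕ) * y ^ (n - (k:ℕ)))) = n * x := by
  rw [Fin.sum_univ_eq_sum_range
    (fun k => (k:ℂ) * ((n.choose k : ℂ) * (x ^ k * y ^ (n - k)))) (n+1)]
  have := congrArg (Polynomial.eval x) (bernsteinPolynomial.sum_smul ℂ n)
  simp only [Polynomial.eval_finsetSum, bernsteinPolynomial] at this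
  simp at this
  rw [← this]
  refine Finset.sum_congr rfl fun k _ => ?_
  rw [show 1 - x = y by rw [← h]; ring]
  ring

theorem aux_sqrt_sq (n k : ℕ) :
    ((√(n.choose k : ℝ) : ℝ) : ℂ) * ((√(n.choose k : ℝ) : ℝ) : ℂ) = (n.choose k : ℂ) := by
  rw [← Complex.ofReal_mul, Real.mul_self_sqrt (by positivity)]; simp

theorem coh_norm (n : ℕ) (a b : ℂ) (h : star a * a + star b * b = 1) :
    star (coh n a b) ⬝ᵥ coh n a b = 1 := by
  rw [← aux_bern0 n _ _ h]
  refine Finset.sum_congr rfl fun k _ => ?_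
  simp only [coh, Pi.star_apply, star_mul', star_pow, Complex.star_def, Complex.conj_ofReal]
  rw [← aux_sqrt_sq]; ring

theorem coh_z (n : ℕ) (a b : ℂ) (h : star a * a + star b * b = 1) :
    star (coh n a b) ⬝ᵥ spinMat n 2 *ᵥ coh n a b
      = (spinVal n : ℂ) * (star a * a - star b * b) := by
  have h0 := aux_bern0 n _ _ h
  have h1 := aux_bern1 n _ _ h
  have : star (coh n a b) ⬝ᵥ spinMat n 2 *ᵥ coh n a b =
      ∑ k : Fin (n+1), (k:ℂ) * ((n.choose k : ℂ) * ((star a * a) ^ (k:ℕ) *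
        (star b * b) ^ (n - (k:ℕ)))) - (n/2:ℂ) *
        ∑ k : Fin (n+1), ((n.choose k : ℂ) * ((star a * a) ^ (k:ℕ) *
        (star b * b) ^ (n - (k:ℕ)))) := by
    rw [Finset.mul_sum, ← Finset.sum_sub_distrib]
    refine Finset.sum_congr rfl fun k _ => ?_
    simp only [spinMat, coh, Pi.star_apply, star_mul', star_pow, Complex.star_def,
      Complex.conj_ofReal, spinVal]
    rw [← aux_sqrt_sq]
    simp [Matrix.mulVec_diagonal, coh]
    ring
  rw [this, h0, h1]
  simp only [spinVal]
  push_cast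
  linear_combination ((n:ℂ)/2) * h

theorem coh_p (n : ℕ) (a b : ℂ) (h : star a * a + star b * b = 1) :
    star (coh n a b) ⬝ᵥ spinP n *ᵥ coh n a b = (n : ℂ) * (star a * b) := by
  have h1 : star (coh n a b) ⬝ᵥ spinP n *ᵥ coh n a b = ∑ j, ∑ k,
      star (coh n a b j) * (spinP n j k * coh n a b k) := by
    simp only [dotProduct, mulVec, Finset.mul_sum, Pi.star_apply]
  rw [h1, Fin.sum_univ_succ]
  have h2 : ∑ k, star (coh n a b 0) * (spinP n 0 k * coh n a b k) = 0 := by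
    refine Finset.sum_eq_zero fun k _ => ?_
    rw [aux_spinP]; simp
  rw [h2, zero_add]
  have h3 : ∀ j : Fin n, ∑ k, star (coh n a b j.succ) * (spinP n j.succ k * coh n a b k)
      = star (coh n a b j.succ) * ((√(((j:ℝ)+1) * ((n:ℝ) - j)) : ℝ) * coh n a b j.castSucc) := by
    intro j
    rw [Finset.sum_eq_single j.castSucc]
    · rw [aux_spinP]; simp
    · intro k _ hk
      rw [aux_spinP, if_neg]
      · simp
      · intro h; apply hk; ext; simpa using h.symm
    · simp
  simp only [h3]
  rcases n with _ | m
  · simp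
  rw [← mul_one (((m+1:ℕ):ℂ) * (star a * b)), ← aux_bern0 m _ _ h, Finset.mul_sum]
  refine Finset.sum_congr rfl fun k _ => ?_
  have hk : (k:ℕ) < m + 1 := k.2
  have e1 := congrArg (fun x : ℝ => (x:ℂ)) (aux_sqrt1 (m+1) k hk)
  have e2 : ((m+1).choose k : ℂ) * ((m+1:ℕ) - (k:ℂ)) = (m+1:ℕ) * (m.choose k) := by
    have := Nat.add_one_mul_choose_eq m k
    have h3 := Nat.choose_succ_right_eq (m+1) k
    rw [← Nat.cast_sub hk.le]
    exact_mod_cast (h3.symm.trans this.symm)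
  simp only [Complex.ofReal_mul, Complex.ofReal_sub, Complex.ofReal_natCast] at e1
  rw [e2] at e1
  simp only [coh, star_mul', star_pow, Complex.star_def, Complex.conj_ofReal,
    Fin.val_succ, Fin.val_castSucc]
  have e3 : m + 1 - (k+1) = m - k := by omega
  have e4 : m + 1 - k = (m - k) + 1 := by omega
  rw [e3, e4]
  linear_combination (starRingEnd ℂ a ^ ((k:ℕ)+1) * starRingEnd ℂ b ^ (m-k) * a^(k:ℕ) * b^(m-k+1)) * e1


def blo (a b : ℂ) : EuclideanSpace ℝ (Fin 3) :=
  !₂[(2 * (star a * b)).re, (2 * (star a * b)).im, Complex.normSq a - Complex.normSq b]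

theorem blo_norm (a b : ℂ) (h : star a * a + star b * b = 1) : ‖blo a b‖ = 1 := by
  have h1 : Complex.normSq a + Complex.normSq b = 1 := by
    have := congrArg Complex.re h
    simp [Complex.normSq_apply] at this ⊢
    linarith
  rw [EuclideanSpace.norm_eq, Real.sqrt_eq_one]
  simp only [Fin.sum_univ_three, blo, Real.norm_eq_abs, sq_abs]
  have h2 : (2 * (star a * b)).re ^ 2 + (2 * (star a * b)).im ^ 2
      = 4 * (Complex.normSq a * Complex.normSq b) := by
    simp [Complex.normSq_apply]; ring
  simp only [PiLp.toLp_apply, Matrix.cons_val_zero, Matrix.cons_val_one, Matrix.cons_val]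
  rw [h2]
  linear_combination (Complex.normSq a + Complex.normSq b + 1) * h1

theorem blo_surj (Ω : EuclideanSpace ℝ (Fin 3)) (h : ‖Ω‖ = 1) :
    ∃ a b : ℂ, star a * a + star b * b = 1 ∧ blo a b = Ω := by
  rw [EuclideanSpace.norm_eq, Real.sqrt_eq_one] at h
  simp only [Fin.sum_univ_three, Real.norm_eq_abs, sq_abs] at h
  have key : ∀ (r s t : ℝ), r * r + (s * s + t * t) = 1 → 2 * r * s = Ω 0 → 2 * r * t = Ω 1 →
      r * r - (s * s + t * t) = Ω 2 →
      ∃ a b : ℂ, star a * a + star b * b = 1 ∧ blo a b = Ω := by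
    intro r s t h0 h1 h2 h3
    refine ⟨r, ⟨s, t⟩, ?_, ?_⟩
    · apply Complex.ext
      · simp; linarith
      · simp; ring
    · ext i
      fin_cases i
      · simp [blo, ← h1]; ring
      · simp [blo, ← h2]; ring
      · simp [blo, Complex.normSq_apply, ← h3]
  by_cases hz : Ω 2 = -1
  · have hx : Ω 0 = 0 ∧ Ω 1 = 0 := by
      rw [hz] at h
      constructor <;> nlinarith [sq_nonneg (Ω 0), sq_nonneg (Ω 1)]
    exact key 0 1 0 (by norm_num) (by simp [hx]) (by simp [hx]) (by simp [hz])
  · have hz1 : -1 ≤ Ω 2 := by nlinarith [sq_nonneg (Ω 0), sq_nonneg (Ω 1)]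
    have hpos : 0 < (1 + Ω 2) / 2 := by
      have := lt_of_le_of_ne hz1 (Ne.symm hz); linarith
    have hr := Real.mul_self_sqrt hpos.le
    have hr0 := Real.sqrt_pos.2 hpos
    set r := √((1 + Ω 2) / 2)
    have hst : (Ω 0 / (2 * r)) * (Ω 0 / (2 * r)) + (Ω 1 / (2 * r)) * (Ω 1 / (2 * r))
        = 1 - r * r := by
      have : (1 - r * r) * (4 * (r * r)) = Ω 0 ^ 2 + Ω 1 ^ 2 := by rw [hr]; linarith
      field_simp
      linear_combination -this
    refine key r (Ω 0 / (2 * r)) (Ω 1 / (2 * r)) ?_ ?_ ?_ ?_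
    · rw [hst]; ring
    · field_simp
    · field_simp
    · rw [hst]; linear_combination 2 * hr

theorem coh_expect (n : ℕ) (a b : ℂ) (h : star a * a + star b * b = 1) (α : Fin 3) :
    star (coh n a b) ⬝ᵥ spinMat n α *ᵥ coh n a b = ((spinVal n * blo a b α : ℝ) : ℂ) := by
  have hp := coh_p n a b h
  have hm : star (coh n a b) ⬝ᵥ (spinP n)ᴴ *ᵥ coh n a b = (n : ℂ) * star (star a * b) := by
    have := congrArg star hp
    rw [Matrix.star_dotProduct, star_star, Matrix.star_mulVec, ← Matrix.dotProduct_mulVec] at this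
    rw [this]; simp
  fin_cases α
  · simp only [spinMat, Fin.zero_eta, if_true, Matrix.smul_mulVec, Matrix.add_mulVec,
      dotProduct_smul, dotProduct_add, hp, hm, blo, spinVal]
    apply Complex.ext <;> simp <;> ring
  · simp only [spinMat, Fin.mk_one, if_true, Matrix.smul_mulVec, Matrix.sub_mulVec,
      dotProduct_smul, dotProduct_sub, hp, hm, blo, spinVal, one_ne_zero, if_false]
    apply Complex.ext <;> simp <;> ring
  · have hz := coh_z n a b h
    refine hz.trans ?_
    simp [blo, Complex.normSq_eq_conj_mul_self]

theorem upper_state (n : ℕ) (Ω : EuclideanSpace ℝ (Fin 3)) (h : ‖Ω‖ = 1) :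
    ∃ c : Fin (n+1) → ℂ, star c ⬝ᵥ c = 1 ∧
      ∀ α, star c ⬝ᵥ spinMat n α *ᵥ c = ((spinVal n * Ω α : ℝ) : ℂ) := by
  obtain ⟨a, b, hab, rfl⟩ := blo_surj Ω h
  exact ⟨coh n a b, coh_norm n a b hab, coh_expect n a b hab⟩

theorem design_aux (n : ℕ) : ∃ (ι : Type) (_ : Fintype ι) (p : ι → ℝ) (a b : ι → ℂ),
    (∀ i, 0 ≤ p i) ∧ (∀ i, star (a i) * a i + star (b i) * b i = 1) ∧
    (∑ i, (p i : ℂ) • vecMulVec (coh n (a i) (b i)) (star (coh n (a i) (b i))) = 1) ∧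
    (∑ i, ((p i : ℂ) * (star (a i) * a i - star (b i) * b i)) •
      vecMulVec (coh n (a i) (b i)) (star (coh n (a i) (b i)))
        = ((1 / (spinVal n + 1) : ℝ) : ℂ) • spinMat n 2) ∧
    (∑ i, ((p i : ℂ) * (2 * (star (a i) * b i))) •
      vecMulVec (coh n (a i) (b i)) (star (coh n (a i) (b i)))
        = ((1 / (spinVal n + 1) : ℝ) : ℂ) • spinP n) := by
  obtain ⟨ι, hι, p, u, hp, hu, hq⟩ := aux_quad (n+1)
  obtain ⟨z, hz, hzs⟩ := aux_roots (n+2) (by omega)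
  have hB := aux_beta (n+1) p u hq
  have hs1 : ∀ i, (((√(u i) : ℝ) : ℂ)) ^ 2 = ((u i : ℝ) : ℂ) := fun i => by
    rw [← Complex.ofReal_pow, Real.sq_sqrt (hu i).1]
  have hs2 : ∀ i, (((√(1 - u i) : ℝ) : ℂ)) ^ 2 = ((1 - u i : ℝ) : ℂ) := fun i => by
    rw [← Complex.ofReal_pow, Real.sq_sqrt (by linarith [(hu i).2])]
  have hzz : ∀ t, star (z t) * z t = 1 := fun t => by
    have := Complex.conj_mul' (z t)
    rw [hz] at this
    simpa using this
  have hn2 : ((n:ℂ) + 2) ≠ 0 := by exact_mod_cast (show n + 2 ≠ 0 by omega)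
  -- general averaging
  have avg : ∀ (g : ι → ℂ) (e f : ℕ), e < n + 2 → f < n + 2 →
      ∑ q : ι × Fin (n+2), ((p q.1 * ((n+1)/(n+2)) : ℝ) : ℂ) *
        (g q.1 * (z q.2 ^ e * star (z q.2) ^ f))
      = if e = f then ((n:ℂ)+1) * ∑ i, (p i : ℂ) * g i else 0 := by
    intro g e f he hf
    rw [Fintype.sum_prod_type]
    have : ∀ i, ∑ t, ((p i * ((n+1)/(n+2)) : ℝ) : ℂ) * (g i * (z t ^ e * star (z t) ^ f))
        = ((p i * ((n+1)/(n+2)) : ℝ) : ℂ) * g i * (if e = f then ((n+2 : ℕ) : ℂ) else 0) := by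
      intro i
      rw [← hzs e f he hf, Finset.mul_sum]
      exact Finset.sum_congr rfl fun t _ => by ring
    simp only [this]
    split_ifs
    · rw [Finset.mul_sum]
      refine Finset.sum_congr rfl fun i _ => ?_
      push_cast
      field_simp
    · simp
  refine ⟨ι × Fin (n+2), inferInstance, fun q => p q.1 * ((n+1)/(n+2)),
    fun q => ((√(u q.1) : ℝ) : ℂ), fun q => ((√(1 - u q.1) : ℝ) : ℂ) * z q.2, ?_, ?_, ?_, ?_, ?_⟩
  · intro q
    have := hp q.1
    positivity
  · intro q
    have h1 := hs1 q.1
    have h2 := hs2 q.1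
    have h3 := hzz q.2
    simp only [star_mul', Complex.star_def, Complex.conj_ofReal] at h3 ⊢
    push_cast at h2
    linear_combination h1 + h2 + (((√(1 - u q.1) : ℝ) : ℂ))^2 * h3
  · ext j k
    have hj := j.2
    have hk := k.2
    have h := avg (fun i => ((√(n.choose j : ℝ) : ℝ) : ℂ) * ((√(n.choose k : ℝ) : ℝ) : ℂ) *
      (((√(u i) : ℝ) : ℂ) ^ ((j:ℕ) + k) * ((√(1 - u i) : ℝ) : ℂ) ^ ((n - j) + (n - k))))
      (n - j) (n - k) (by omega) (by omega)
    rw [Matrix.sum_apply]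
    refine Eq.trans (Finset.sum_congr rfl fun q _ => ?_) (h.trans ?_)
    · simp only [Matrix.smul_apply, vecMulVec_apply, coh, Pi.star_apply, star_mul', star_pow,
        Complex.star_def, Complex.conj_ofReal, smul_eq_mul]
      ring
    · by_cases hjk : j = k
      · subst hjk
        have hb := hB (n - j) j (by omega)
        rw [if_pos rfl, Matrix.one_apply_eq]
        have : ∀ i, (p i : ℂ) * (((√(n.choose j : ℝ) : ℝ) : ℂ) * ((√(n.choose j : ℝ) : ℝ) : ℂ) *
          (((√(u i) : ℝ) : ℂ) ^ ((j:ℕ) + j) * ((√(1 - u i) : ℝ) : ℂ) ^ ((n - j) + (n - j))))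
            = (n.choose j : ℂ) * ((p i * (u i ^ (j:ℕ) * (1 - u i) ^ (n - (j:ℕ))) : ℝ) : ℂ) := by
          intro i
          rw [aux_sqrt_sq, ← two_mul, ← two_mul, pow_mul, pow_mul, hs1, hs2]
          push_cast; ring
        simp only [this]
        rw [← Finset.mul_sum, ← Complex.ofReal_sum, hb]
        have e1 := Nat.choose_mul_factorial_mul_factorial (show (j:ℕ) ≤ n by omega)
        rw [show (j:ℕ) + (n - j) + 1 = n + 1 by omega, Nat.factorial_succ]
        have e2 : (n.choose j : ℂ) * (j:ℕ).factorial * (n - (j:ℕ)).factorial = n.factorial := by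
          exact_mod_cast e1
        have e3 : (n.factorial : ℂ) ≠ 0 := by exact_mod_cast n.factorial_ne_zero
        have e4 : (n:ℂ) + 1 ≠ 0 := by exact_mod_cast n.succ_ne_zero
        push_cast
        field_simp
        linear_combination e2
      · rw [if_neg, Matrix.one_apply_ne hjk]
        intro h; apply hjk; ext; omega
  · ext j k
    have hj := j.2
    have hk := k.2
    have h := avg (fun i => (((u i - (1 - u i) : ℝ)) : ℂ) *
      (((√(n.choose j : ℝ) : ℝ) : ℂ) * ((√(n.choose k : ℝ) : ℝ) : ℂ) *
      (((√(u i) : ℝ) : ℂ) ^ ((j:ℕ) + k) * ((√(1 - u i) : ℝ) : ℂ) ^ ((n - j) + (n - k)))))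
      (n - j) (n - k) (by omega) (by omega)
    rw [Matrix.sum_apply]
    refine Eq.trans (Finset.sum_congr rfl fun q _ => ?_) (h.trans ?_)
    · have h1 := hs1 q.1
      have h2 := hs2 q.1
      have h3 := hzz q.2
      have h4 : star ((√(u q.1) : ℝ) : ℂ) * ((√(u q.1) : ℝ) : ℂ) -
        star (((√(1 - u q.1) : ℝ) : ℂ) * z q.2) * (((√(1 - u q.1) : ℝ) : ℂ) * z q.2)
          = ((u q.1 - (1 - u q.1) : ℝ) : ℂ) := by
        simp only [star_mul', Complex.star_def, Complex.conj_ofReal] at h3 ⊢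
        push_cast at h2 ⊢
        linear_combination h1 - h2 - (((√(1 - u q.1) : ℝ) : ℂ))^2 * h3
      simp only [h4]
      simp only [Matrix.smul_apply, vecMulVec_apply, coh, Pi.star_apply, star_mul', star_pow,
        Complex.star_def, Complex.conj_ofReal, smul_eq_mul]
      ring
    · have hS : spinMat n 2 = Matrix.diagonal (fun k : Fin (n+1) => ((((k : ℕ) : ℝ) - spinVal n : ℝ) : ℂ)) := by
        simp [spinMat]
      rw [hS]
      simp only [Matrix.smul_apply, smul_eq_mul]
      by_cases hjk : j = k
      · subst hjk
        have hb := hB (n - j) (j+1) (by omega)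
        have hb' := hB (n - j + 1) j (by omega)
        rw [if_pos rfl, Matrix.diagonal_apply_eq]
        have : ∀ i, (p i : ℂ) * ((((u i - (1 - u i) : ℝ)) : ℂ) *
          (((√(n.choose j : ℝ) : ℝ) : ℂ) * ((√(n.choose j : ℝ) : ℝ) : ℂ) *
          (((√(u i) : ℝ) : ℂ) ^ ((j:ℕ) + j) * ((√(1 - u i) : ℝ) : ℂ) ^ ((n - j) + (n - j)))))
            = (n.choose j : ℂ) * (((p i * (u i ^ ((j:ℕ)+1) * (1 - u i) ^ (n - (j:ℕ))) : ℝ) : ℂ) -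
             ((p i * (u i ^ (j:ℕ) * (1 - u i) ^ (n - (j:ℕ) + 1)) : ℝ) : ℂ)) := by
          intro i
          rw [aux_sqrt_sq, ← two_mul, ← two_mul, pow_mul, pow_mul, hs1, hs2]
          push_cast; ring
        simp only [this]
        rw [← Finset.mul_sum, Finset.sum_sub_distrib, ← Complex.ofReal_sum, ← Complex.ofReal_sum,
          hb, hb']
        have e1 := Nat.choose_mul_factorial_mul_factorial (show (j:ℕ) ≤ n by omega)
        rw [show (j:ℕ) + 1 + (n - j) + 1 = n + 1 + 1 by omega,
          show (j:ℕ) + (n - j + 1) + 1 = n + 1 + 1 by omega, Nat.factorial_succ (n+1),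
          Nat.factorial_succ n, Nat.factorial_succ (j:ℕ), Nat.factorial_succ (n - (j:ℕ))]
        have e2 : (n.choose j : ℂ) * (j:ℕ).factorial * (n - (j:ℕ)).factorial = n.factorial := by
          exact_mod_cast e1
        have e3 : (n.factorial : ℂ) ≠ 0 := by exact_mod_cast n.factorial_ne_zero
        have e4 : (n:ℂ) + 1 ≠ 0 := by exact_mod_cast n.succ_ne_zero
        have e5 : ((n - (j:ℕ) : ℕ) : ℂ) = n - j := Nat.cast_sub (by omega)
        have e6 : (n:ℂ) + 1 + 1 ≠ 0 := by exact_mod_cast (n+1).succ_ne_zero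
        simp only [spinVal]
        have e7 : (n:ℂ) / 2 + 1 = (n + 1 + 1) / 2 := by ring
        push_cast
        rw [e5, e7]
        field_simp
        linear_combination (2 * (j:ℂ) - n) * e2
      · rw [if_neg, Matrix.diagonal_apply_ne _ hjk, mul_zero]
        intro h; apply hjk; ext; omega
  · ext j k
    have hj := j.2
    have hk := k.2
    have h := avg (fun i => 2 *
      (((√(n.choose j : ℝ) : ℝ) : ℂ) * ((√(n.choose k : ℝ) : ℝ) : ℂ) *
      (((√(u i) : ℝ) : ℂ) ^ ((j:ℕ) + k + 1) * ((√(1 - u i) : ℝ) : ℂ) ^ ((n - j) + (n - k) + 1))))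
      (n - j + 1) (n - k) (by omega) (by omega)
    rw [Matrix.sum_apply]
    refine Eq.trans (Finset.sum_congr rfl fun q _ => ?_) (h.trans ?_)
    · simp only [Matrix.smul_apply, vecMulVec_apply, coh, Pi.star_apply, star_mul', star_pow,
        Complex.star_def, Complex.conj_ofReal, smul_eq_mul]
      ring
    · simp only [Matrix.smul_apply, smul_eq_mul]
      rw [aux_spinP]
      by_cases hjk : (j:ℕ) = k + 1
      · have hkn : (k:ℕ) < n := by omega
        have hb := hB (n - k) (k+1) (by omega)
        rw [if_pos (by omega), if_pos hjk, hjk]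
        have : ∀ i, (p i : ℂ) * (2 *
          (((√(n.choose (k+1) : ℝ) : ℝ) : ℂ) * ((√(n.choose k : ℝ) : ℝ) : ℂ) *
          (((√(u i) : ℝ) : ℂ) ^ ((k:ℕ) + 1 + k + 1) *
            ((√(1 - u i) : ℝ) : ℂ) ^ ((n - (k+1)) + (n - k) + 1))))
            = (2 * (((√(n.choose (k+1) : ℝ) : ℝ) : ℂ) * ((√(n.choose k : ℝ) : ℝ) : ℂ))) *
             ((p i * (u i ^ ((k:ℕ)+1) * (1 - u i) ^ (n - (k:ℕ))) : ℝ) : ℂ) := by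
          intro i
          rw [show (k:ℕ) + 1 + k + 1 = 2 * (k+1) by ring,
            show (n - ((k:ℕ)+1)) + (n - k) + 1 = 2 * (n - k) by omega, pow_mul, pow_mul, hs1, hs2]
          push_cast; ring
        simp only [this]
        rw [← Finset.mul_sum, ← Complex.ofReal_sum, hb]
        have e1 := Nat.choose_mul_factorial_mul_factorial (show (k:ℕ) ≤ n by omega)
        rw [show (k:ℕ) + 1 + (n - k) + 1 = n + 1 + 1 by omega, Nat.factorial_succ (n+1),
          Nat.factorial_succ n, Nat.factorial_succ (k:ℕ)]
        have e2 : (n.choose k : ℂ) * (k:ℕ).factorial * (n - (k:ℕ)).factorial = n.factorial := by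
          exact_mod_cast e1
        have e3 : (n.factorial : ℂ) ≠ 0 := by exact_mod_cast n.factorial_ne_zero
        have e4 : (n:ℂ) + 1 ≠ 0 := by exact_mod_cast n.succ_ne_zero
        have e6 : (n:ℂ) + 1 + 1 ≠ 0 := by exact_mod_cast (n+1).succ_ne_zero
        have e7 := congrArg (fun x : ℝ => (x:ℂ)) (aux_sqrt2 n k hkn)
        simp only [Complex.ofReal_mul, Complex.ofReal_natCast, Complex.ofReal_add,
          Complex.ofReal_one] at e7
        simp only [spinVal]
        have e8 : (n:ℂ) + 2 = n + 1 + 1 := by ring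
        simp only [Complex.ofReal_mul, Complex.ofReal_natCast, Complex.ofReal_add,
          Complex.ofReal_one, Complex.ofReal_div, Complex.ofReal_ofNat, Nat.cast_mul, Nat.cast_add,
          Nat.cast_one]
        generalize ((√(n.choose (k+1) : ℝ) : ℝ) : ℂ) = X at *
        generalize ((√(n.choose k : ℝ) : ℝ) : ℂ) = Y at *
        generalize ((√(((k:ℝ)+1) * ((n:ℝ) - k)) : ℝ) : ℂ) = W at *
        field_simp
        rw [e8]
        field_simp
        linear_combination ((k:ℕ).factorial * (n - (k:ℕ)).factorial : ℂ) * e7 + W * e2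
      · rw [if_neg (by omega), if_neg hjk, mul_zero]

theorem design (n : ℕ) : ∃ (ι : Type) (_ : Fintype ι) (p : ι → ℝ)
    (Ω : ι → EuclideanSpace ℝ (Fin 3)) (c : ι → Fin (n+1) → ℂ),
    (∀ i, 0 ≤ p i) ∧ (∀ i, ‖Ω i‖ = 1) ∧
    (∑ i, (p i : ℂ) • vecMulVec (c i) (star (c i)) = 1) ∧
    ∀ α, ∑ i, ((p i : ℂ) * (Ω i α : ℂ)) • vecMulVec (c i) (star (c i))
        = ((1 / (spinVal n + 1) : ℝ) : ℂ) • spinMat n α := by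
  obtain ⟨ι, hι, p, a, b, hp, hab, h1, h2, h3⟩ := design_aux n
  refine ⟨ι, hι, p, fun i => blo (a i) (b i), fun i => coh n (a i) (b i), hp,
    fun i => blo_norm _ _ (hab i), h1, ?_⟩
  have h4 := congrArg conjTranspose h3
  simp only [conjTranspose_sum, conjTranspose_smul, conjTranspose_vecMulVec, star_star,
    star_mul', Complex.star_def, Complex.conj_ofReal, Complex.conj_conj] at h4
  simp only [Complex.star_def] at h3
  intro α
  fin_cases α
  · simp only [spinMat, Fin.zero_eta, if_true]
    rw [smul_comm, smul_add, ← h3, ← h4, ← Finset.sum_add_distrib, Finset.smul_sum]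
    refine Finset.sum_congr rfl fun i _ => ?_
    rw [← add_smul, smul_smul]
    congr 1
    apply Complex.ext <;> simp [blo] <;> ring
  · simp only [spinMat, Fin.mk_one, if_true, one_ne_zero, if_false]
    rw [smul_comm, smul_sub, ← h3, ← h4, ← Finset.sum_sub_distrib, Finset.smul_sum]
    refine Finset.sum_congr rfl fun i _ => ?_
    rw [← sub_smul, smul_smul]
    congr 1
    apply Complex.ext <;> simp [blo] <;> ring
  · refine Eq.trans (Finset.sum_congr rfl fun i _ => ?_) h2
    congr 2
    simp [blo, Complex.normSq_eq_conj_mul_self]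

section tensors

open scoped ComplexOrder

variable {V : Type*} [Fintype V] [DecidableEq V] {n : ℕ}

def tens (A : V → Matrix (Fin (n+1)) (Fin (n+1)) ℂ) :
    Matrix (V → Fin (n+1)) (V → Fin (n+1)) ℂ :=
  Matrix.of fun x y => ∏ i, A i (x i) (y i)

def pvec (c : V → Fin (n+1) → ℂ) : (V → Fin (n+1)) → ℂ := fun x => ∏ i, c i (x i)

theorem tens_mul (A B : V → Matrix (Fin (n+1)) (Fin (n+1)) ℂ) :
    tens A * tens B = tens fun i => A i * B i := by
  ext x y
  simp only [tens, Matrix.mul_apply, Matrix.of_apply]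
  rw [Finset.prod_univ_sum, Fintype.piFinset_univ]
  simp [Finset.prod_mul_distrib]

theorem tens_one : tens (fun _ : V => (1 : Matrix (Fin (n+1)) (Fin (n+1)) ℂ)) = 1 := by
  ext x y
  simp only [tens, Matrix.of_apply, Matrix.one_apply]
  rw [Finset.prod_ite_zero]
  simp [funext_iff]

theorem siteOp_eq (i : V) (A : Matrix (Fin (n+1)) (Fin (n+1)) ℂ) :
    siteOp n i A = tens fun l => if l = i then A else 1 := by
  ext x y
  simp only [tens, siteOp, Matrix.of_apply]
  rw [← Finset.mul_prod_erase _ _ (Finset.mem_univ i), if_pos rfl]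
  have : ∏ l ∈ Finset.univ.erase i, (if l = i then A else 1) (x l) (y l)
      = ∏ l ∈ Finset.univ.erase i, if x l = y l then 1 else 0 := by
    refine Finset.prod_congr rfl fun l hl => ?_
    rw [if_neg (Finset.ne_of_mem_erase hl), Matrix.one_apply]
  rw [this, Finset.prod_ite_zero]
  simp

theorem siteOp_mul {i j : V} (hij : i ≠ j) (A B : Matrix (Fin (n+1)) (Fin (n+1)) ℂ) :
    siteOp n i A * siteOp n j B = tens fun l => if l = i then A else if l = j then B else 1 := by
  rw [siteOp_eq, siteOp_eq, tens_mul]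
  congr 1
  ext1 l
  by_cases h : l = i
  · subst h; simp [hij]
  · simp [h]

theorem siteOp_smul (i : V) (s : ℂ) (A : Matrix (Fin (n+1)) (Fin (n+1)) ℂ) :
    siteOp n i (s • A) = s • siteOp n i A := by
  ext x y
  simp [siteOp]

theorem siteOp_conj (i : V) (A : Matrix (Fin (n+1)) (Fin (n+1)) ℂ) :
    (siteOp n i A)ᴴ = siteOp n i Aᴴ := by
  ext x y
  simp only [siteOp, Matrix.conjTranspose_apply]
  simp only [eq_comm (a := y _)]
  split_ifs <;> simp

theorem tens_sum {ι : Type*} [Fintype ι] (F : V → ι → Matrix (Fin (n+1)) (Fin (n+1)) ℂ) :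
    tens (fun i => ∑ k, F i k) = ∑ κ : V → ι, tens fun i => F i (κ i) := by
  ext x y
  simp only [tens, Matrix.of_apply, Matrix.sum_apply]
  rw [Finset.prod_univ_sum, Fintype.piFinset_univ]

theorem tens_rank1 (f : V → ℂ) (c : V → Fin (n+1) → ℂ) :
    tens (fun i => f i • vecMulVec (c i) (star (c i)))
      = (∏ i, f i) • vecMulVec (pvec c) (star (pvec c)) := by
  ext x y
  simp [tens, pvec, vecMulVec_apply, Finset.prod_mul_distrib]

theorem tens_mulVec (A : V → Matrix (Fin (n+1)) (Fin (n+1)) ℂ) (c : V → Fin (n+1) → ℂ) :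
    tens A *ᵥ pvec c = pvec fun i => A i *ᵥ c i := by
  ext x
  simp only [tens, pvec, mulVec, dotProduct, Matrix.of_apply]
  rw [Finset.prod_univ_sum, Fintype.piFinset_univ]
  simp [Finset.prod_mul_distrib]

theorem pvec_dot (c d : V → Fin (n+1) → ℂ) :
    star (pvec c) ⬝ᵥ pvec d = ∏ i, star (c i) ⬝ᵥ d i := by
  simp only [pvec, dotProduct, Pi.star_apply]
  rw [Finset.prod_univ_sum, Fintype.piFinset_univ]
  simp [Finset.prod_mul_distrib]

theorem spinMat_herm (n : ℕ) (α : Fin 3) : (spinMat n α)ᴴ = spinMat n α := by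
  fin_cases α
  · simp [spinMat, add_comm]
  · simp only [spinMat, Fin.mk_one, one_ne_zero, if_false, if_true]
    rw [conjTranspose_smul, conjTranspose_sub, conjTranspose_conjTranspose, ← neg_sub, smul_neg,
      ← neg_smul]
    congr 1
    simp
  · ext i j
    by_cases h : i = j
    · subst h; simp [spinMat]
    · simp [spinMat, Matrix.diagonal_apply, h, Ne.symm h]

theorem hQHA_herm (w : V → V → ℝ) (hsymm : ∀ i j, w i j = w j i) : (hQHA n w).IsHermitian := by
  have hh : ∀ i j : V, (heis n i j)ᴴ = heis n j i := by
    intro i j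
    unfold heis
    rw [conjTranspose_sum]
    refine Finset.sum_congr rfl fun α _ => ?_
    rw [conjTranspose_mul, siteOp_conj, siteOp_conj, spinMat_herm]
  unfold Matrix.IsHermitian hQHA
  rw [conjTranspose_smul, conjTranspose_sum, Complex.star_def, Complex.conj_ofReal]
  simp only [conjTranspose_sum, conjTranspose_smul, Complex.star_def, Complex.conj_ofReal, hh]
  rw [Finset.sum_comm]
  refine congrArg _ (Finset.sum_congr rfl fun i _ => ?_)
  refine Finset.sum_congr rfl fun j _ => ?_
  rw [hsymm]

theorem inner3 (x y : EuclideanSpace ℝ (Fin 3)) : ⟪x, y⟫ = ∑ α, x α * y α := by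
  simp [PiLp.inner_apply, mul_comm]

theorem prod_pair {i j : V} (hij : i ≠ j) (a b : ℂ) :
    ∏ l, (if l = i then a else if l = j then b else 1) = a * b := by
  have : ∀ l, (if l = i then a else if l = j then b else 1)
      = (if l = i then a else 1) * (if l = j then b else 1) := by
    intro l
    by_cases h : l = i
    · subst h; simp [hij]
    · simp [h]
  simp only [this, Finset.prod_mul_distrib]
  simp

theorem heis_design {ι : Type} [Fintype ι] (p : ι → ℝ)
    (Ω : ι → EuclideanSpace ℝ (Fin 3)) (c : ι → Fin (n+1) → ℂ)
    (h1 : ∑ i, (p i : ℂ) • vecMulVec (c i) (star (c i)) = 1)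
    (h2 : ∀ α, ∑ i, ((p i : ℂ) * (Ω i α : ℂ)) • vecMulVec (c i) (star (c i))
        = ((1 / (spinVal n + 1) : ℝ) : ℂ) • spinMat n α) {i j : V} (hij : i ≠ j) :
    ((1 / (spinVal n + 1) ^ 2 : ℝ) : ℂ) • heis n i j =
      ∑ κ : V → ι, (((∏ l, p (κ l)) * ⟪Ω (κ i), Ω (κ j)⟫ : ℝ) : ℂ) •
        vecMulVec (pvec fun l => c (κ l)) (star (pvec fun l => c (κ l))) := by
  have hα : ∀ α, ((1 / (spinVal n + 1) ^ 2 : ℝ) : ℂ) •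
      (siteOp n i (spinMat n α) * siteOp n j (spinMat n α)) =
      ∑ κ : V → ι, (((∏ l, p (κ l)) * (Ω (κ i) α * Ω (κ j) α) : ℝ) : ℂ) •
        vecMulVec (pvec fun l => c (κ l)) (star (pvec fun l => c (κ l))) := by
    intro α
    have e1 : ((1 / (spinVal n + 1) ^ 2 : ℝ) : ℂ) •
      (siteOp n i (spinMat n α) * siteOp n j (spinMat n α))
      = siteOp n i (((1 / (spinVal n + 1) : ℝ) : ℂ) • spinMat n α) *
        siteOp n j (((1 / (spinVal n + 1) : ℝ) : ℂ) • spinMat n α) := by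
      rw [siteOp_smul, siteOp_smul, smul_mul_smul_comm]
      congr 1
      push_cast
      field_simp
    rw [e1, siteOp_mul hij, ← h2 α]
    have e2 : (fun l : V => if l = i then
          ∑ k, ((p k : ℂ) * (Ω k α : ℂ)) • vecMulVec (c k) (star (c k))
        else if l = j then ∑ k, ((p k : ℂ) * (Ω k α : ℂ)) • vecMulVec (c k) (star (c k))
        else 1) = fun l : V => ∑ k, ((p k : ℂ) * (if l = i then (Ω k α : ℂ) else
          if l = j then (Ω k α : ℂ) else 1)) • vecMulVec (c k) (star (c k)) := by
      ext1 l
      split_ifs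
      · rfl
      · rfl
      · rw [← h1]; simp
    rw [e2, tens_sum]
    refine Finset.sum_congr rfl fun κ _ => ?_
    rw [tens_rank1, Finset.prod_mul_distrib]
    congr 1
    have e3 : ∏ l, (if l = i then (Ω (κ l) α : ℂ) else if l = j then (Ω (κ l) α : ℂ) else 1)
        = (Ω (κ i) α : ℂ) * (Ω (κ j) α : ℂ) := by
      rw [← prod_pair hij]
      refine Finset.prod_congr rfl fun l _ => ?_
      split_ifs with h h'
      · rw [h]
      · rw [h']
      · rfl
    rw [e3]
    push_cast
    rfl
  rw [heis, Finset.smul_sum]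
  simp only [hα]
  rw [Finset.sum_comm]
  refine Finset.sum_congr rfl fun κ _ => ?_
  rw [← Finset.sum_smul, inner3, Finset.mul_sum, Complex.ofReal_sum]

theorem hQHA_design {ι : Type} [Fintype ι] (hn : 1 ≤ n) (p : ι → ℝ)
    (Ω : ι → EuclideanSpace ℝ (Fin 3)) (c : ι → Fin (n+1) → ℂ)
    (h1 : ∑ i, (p i : ℂ) • vecMulVec (c i) (star (c i)) = 1)
    (h2 : ∀ α, ∑ i, ((p i : ℂ) * (Ω i α : ℂ)) • vecMulVec (c i) (star (c i))
        = ((1 / (spinVal n + 1) : ℝ) : ℂ) • spinMat n α)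
    (w : V → V → ℝ) (hloop : ∀ i, w i i = 0) :
    hQHA n w = ∑ κ : V → ι, ((((spinVal n + 1) / spinVal n) ^ 2 *
        ((∏ l, p (κ l)) * chaEnergy w fun l => Ω (κ l)) : ℝ) : ℂ) •
        vecMulVec (pvec fun l => c (κ l)) (star (pvec fun l => c (κ l))) := by
  have hS : 0 < spinVal n := by
    unfold spinVal
    have : (1:ℝ) ≤ n := by exact_mod_cast hn
    linarith
  have hij : ∀ i j, (w i j : ℂ) • heis n i j = ∑ κ : V → ι,
      (((spinVal n + 1) ^ 2 * ((∏ l, p (κ l)) * (w i j * ⟪Ω (κ i), Ω (κ j)⟫)) : ℝ) : ℂ) •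
        vecMulVec (pvec fun l => c (κ l)) (star (pvec fun l => c (κ l))) := by
    intro i j
    by_cases h : i = j
    · subst h; simp [hloop]
    · have e1 : heis n i j = (((spinVal n + 1) ^ 2 : ℝ) : ℂ) •
          (((1 / (spinVal n + 1) ^ 2 : ℝ) : ℂ) • heis n i j) := by
        rw [smul_smul, ← Complex.ofReal_mul, mul_one_div_cancel (by positivity)]
        simp
      rw [e1, heis_design p Ω c h1 h2 h, Finset.smul_sum, Finset.smul_sum]
      refine Finset.sum_congr rfl fun κ _ => ?_
      rw [smul_smul, smul_smul]
      congr 1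
      push_cast
      ring
  unfold hQHA
  simp only [hij]
  have e2 : ∀ i, ∑ j, ∑ κ : V → ι,
      (((spinVal n + 1) ^ 2 * ((∏ l, p (κ l)) * (w i j * ⟪Ω (κ i), Ω (κ j)⟫)) : ℝ) : ℂ) •
        vecMulVec (pvec fun l => c (κ l)) (star (pvec fun l => c (κ l))) =
      ∑ κ : V → ι, ∑ j,
      (((spinVal n + 1) ^ 2 * ((∏ l, p (κ l)) * (w i j * ⟪Ω (κ i), Ω (κ j)⟫)) : ℝ) : ℂ) •
        vecMulVec (pvec fun l => c (κ l)) (star (pvec fun l => c (κ l))) :=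
    fun i => Finset.sum_comm
  simp only [e2]
  rw [Finset.sum_comm, Finset.smul_sum]
  refine Finset.sum_congr rfl fun κ _ => ?_
  simp only [← Finset.sum_smul, ← Complex.ofReal_sum, ← Finset.mul_sum]
  rw [smul_smul, ← Complex.ofReal_mul]
  congr 2
  unfold chaEnergy
  field_simp

theorem quad_rank1 {m : Type*} [Fintype m] (ψ v : m → ℂ) :
    star v ⬝ᵥ vecMulVec ψ (star ψ) *ᵥ v = (Complex.normSq (star ψ ⬝ᵥ v) : ℂ) := by
  rw [Matrix.vecMulVec_mulVec, Complex.normSq_eq_conj_mul_self, ← Complex.star_def,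
    ← Matrix.star_dotProduct v ψ]
  simp [dotProduct_smul]
  ring

theorem cha_bdd (w : V → V → ℝ) : BddBelow {x : ℝ | ∃ Ω : V → EuclideanSpace ℝ (Fin 3),
    (∀ i, ‖Ω i‖ = 1) ∧ x = chaEnergy w Ω} := by
  refine ⟨(1/4) * ∑ i, ∑ j, -|w i j|, ?_⟩
  rintro x ⟨Ω, hΩ, rfl⟩
  unfold chaEnergy
  gcongr with i _ j _
  have h := abs_real_inner_le_norm (Ω i) (Ω j)
  rw [hΩ, hΩ, mul_one] at h
  have : |w i j * ⟪Ω i, Ω j⟫| ≤ |w i j| := by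
    rw [abs_mul]; exact mul_le_of_le_one_right (abs_nonneg _) h
  exact (abs_le.1 this).1

theorem lower_eig (hn : 1 ≤ n) (w : V → V → ℝ) (hloop : ∀ i, w i i = 0) (r : ℝ)
    (v : (V → Fin (n+1)) → ℂ) (hv : v ≠ 0) (hr : hQHA n w *ᵥ v = (r : ℂ) • v) :
    ((spinVal n + 1) / spinVal n) ^ 2 * chaVal w ≤ r := by
  obtain ⟨ι, hι, p, Ω, c, hp, hΩ, h1, h2⟩ := design n
  have hH := hQHA_design hn p Ω c h1 h2 w hloop
  have hI : (1 : Matrix (V → Fin (n+1)) (V → Fin (n+1)) ℂ) = ∑ κ : V → ι,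
      ((∏ l, p (κ l) : ℝ) : ℂ) •
        vecMulVec (pvec fun l => c (κ l)) (star (pvec fun l => c (κ l))) := by
    rw [← tens_one, ← h1, tens_sum]
    refine Finset.sum_congr rfl fun κ _ => ?_
    rw [tens_rank1]
    push_cast
    rfl
  set N : (V → ι) → ℝ := fun κ => Complex.normSq (star (pvec fun l => c (κ l)) ⬝ᵥ v) with hN
  have q1 : star v ⬝ᵥ v = ((∑ κ : V → ι, (∏ l, p (κ l)) * N κ : ℝ) : ℂ) := by
    have e : star v ⬝ᵥ v = star v ⬝ᵥ (1 : Matrix (V → Fin (n+1)) (V → Fin (n+1)) ℂ) *ᵥ v := by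
      rw [Matrix.one_mulVec]
    rw [e, hI, Matrix.sum_mulVec, dotProduct_sum, Complex.ofReal_sum]
    refine Finset.sum_congr rfl fun κ _ => ?_
    rw [Matrix.smul_mulVec, dotProduct_smul, quad_rank1, smul_eq_mul, Complex.ofReal_mul]
  have q2 : (r : ℂ) * (star v ⬝ᵥ v) = ((∑ κ : V → ι, ((spinVal n + 1) / spinVal n) ^ 2 *
      ((∏ l, p (κ l)) * chaEnergy w fun l => Ω (κ l)) * N κ : ℝ) : ℂ) := by
    rw [← smul_eq_mul, ← dotProduct_smul, ← hr, hH, Matrix.sum_mulVec, dotProduct_sum,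
      Complex.ofReal_sum]
    refine Finset.sum_congr rfl fun κ _ => ?_
    rw [Matrix.smul_mulVec, dotProduct_smul, quad_rank1, smul_eq_mul, Complex.ofReal_mul _ (N κ)]
  have hpos : 0 < ∑ κ : V → ι, (∏ l, p (κ l)) * N κ := by
    have : 0 < star v ⬝ᵥ v := Matrix.dotProduct_star_self_pos_iff.2 hv
    rw [q1] at this
    exact_mod_cast this
  rw [q1, ← Complex.ofReal_mul, Complex.ofReal_inj] at q2
  rw [← mul_le_mul_iff_left₀ hpos, q2, Finset.mul_sum]
  refine Finset.sum_le_sum fun κ _ => ?_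
  have hc : chaVal w ≤ chaEnergy w fun l => Ω (κ l) :=
    csInf_le (cha_bdd w) ⟨_, fun i => hΩ _, rfl⟩
  have hW : 0 ≤ ∏ l, p (κ l) := Finset.prod_nonneg fun l _ => hp _
  have hN0 : 0 ≤ N κ := Complex.normSq_nonneg _
  calc _ = ((spinVal n + 1) / spinVal n) ^ 2 * ((∏ l, p (κ l)) * chaVal w) * N κ := by ring
    _ ≤ _ := by gcongr

theorem upper_quad (hn : 1 ≤ n) (w : V → V → ℝ) (hloop : ∀ i, w i i = 0)
    (Ω : V → EuclideanSpace ℝ (Fin 3)) (hΩ : ∀ i, ‖Ω i‖ = 1) :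
    ∃ ψ : (V → Fin (n+1)) → ℂ, star ψ ⬝ᵥ ψ = 1 ∧
      star ψ ⬝ᵥ hQHA n w *ᵥ ψ = (chaEnergy w Ω : ℂ) := by
  have hS : 0 < spinVal n := by
    unfold spinVal
    have : (1:ℝ) ≤ n := by exact_mod_cast hn
    linarith
  choose c hc1 hc2 using fun i => upper_state n (Ω i) (hΩ i)
  refine ⟨pvec c, by simp [pvec_dot, hc1], ?_⟩
  have hh : ∀ i j, i ≠ j → star (pvec c) ⬝ᵥ heis n i j *ᵥ pvec c
      = (((spinVal n) ^ 2 * ⟪Ω i, Ω j⟫ : ℝ) : ℂ) := by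
    intro i j hij
    rw [heis, Matrix.sum_mulVec, dotProduct_sum, inner3, Finset.mul_sum, Complex.ofReal_sum]
    refine Finset.sum_congr rfl fun α _ => ?_
    rw [siteOp_mul hij, tens_mulVec, pvec_dot]
    have : ∀ l, star (c l) ⬝ᵥ (if l = i then spinMat n α else if l = j then spinMat n α else 1) *ᵥ
        c l = if l = i then ((spinVal n * Ω i α : ℝ) : ℂ) else
          if l = j then ((spinVal n * Ω j α : ℝ) : ℂ) else 1 := by
      intro l
      split_ifs with h h'
      · rw [hc2, h]
      · rw [hc2, h']
      · rw [Matrix.one_mulVec, hc1]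
    simp only [this]
    rw [prod_pair hij]
    push_cast
    ring
  unfold hQHA
  rw [Matrix.smul_mulVec, dotProduct_smul]
  simp only [Matrix.sum_mulVec, dotProduct_sum, Matrix.smul_mulVec, dotProduct_smul]
  have hh' : ∀ i j, (w i j : ℂ) • (star (pvec c) ⬝ᵥ heis n i j *ᵥ pvec c)
      = (((spinVal n) ^ 2 * (w i j * ⟪Ω i, Ω j⟫) : ℝ) : ℂ) := by
    intro i j
    by_cases h : i = j
    · subst h; simp [hloop]
    · rw [hh i j h, smul_eq_mul]; push_cast; ring
  simp only [hh', ← Complex.ofReal_sum, ← Finset.mul_sum]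
  rw [smul_eq_mul, ← Complex.ofReal_mul]
  congr 1
  unfold chaEnergy
  field_simp

theorem rayleigh {m : Type*} [Fintype m] [DecidableEq m] (A : Matrix m m ℂ) (hA : A.IsHermitian)
    (hb : BddBelow {r : ℝ | ∃ v : m → ℂ, v ≠ 0 ∧ A.mulVec v = (r : ℂ) • v})
    (ψ : m → ℂ) (h1 : star ψ ⬝ᵥ ψ = 1) (e : ℝ) (he : star ψ ⬝ᵥ A *ᵥ ψ = (e : ℂ)) :
    minEig A ≤ e := by
  set μ := minEig A with hμ
  have hB : (A - (μ : ℂ) • (1 : Matrix m m ℂ)).IsHermitian := by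
    refine hA.sub ?_
    unfold Matrix.IsHermitian
    simp
  have hpsd : (A - (μ : ℂ) • (1 : Matrix m m ℂ)).PosSemidef := by
    rw [hB.posSemidef_iff_eigenvalues_nonneg]
    intro i
    have h := hB.mulVec_eigenvectorBasis i
    have hne : (⇑(hB.eigenvectorBasis i) : m → ℂ) ≠ 0 := by
      intro h0
      have := hB.eigenvectorBasis.toBasis.ne_zero i
      apply this
      ext k
      simpa using congrFun h0 k
    have : μ ≤ hB.eigenvalues i + μ := by
      refine csInf_le hb ⟨_, hne, ?_⟩
      rw [Matrix.sub_mulVec, Matrix.smul_mulVec, Matrix.one_mulVec, sub_eq_iff_eq_add] at h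
      rw [h]
      ext k
      simp
      ring
    simpa using this
  have h := hpsd.re_dotProduct_nonneg ψ
  rw [Matrix.sub_mulVec, Matrix.smul_mulVec, Matrix.one_mulVec, dotProduct_sub, dotProduct_smul,
    h1, he] at h
  simpa using h

theorem eig_nonempty {m : Type*} [Fintype m] [DecidableEq m] [Nonempty m] (A : Matrix m m ℂ)
    (hA : A.IsHermitian) :
    {r : ℝ | ∃ v : m → ℂ, v ≠ 0 ∧ A.mulVec v = (r : ℂ) • v}.Nonempty := by
  obtain ⟨i⟩ := ‹Nonempty m›
  refine ⟨hA.eigenvalues i, ⇑(hA.eigenvectorBasis i), ?_, ?_⟩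
  · intro h0
    apply hA.eigenvectorBasis.toBasis.ne_zero i
    ext k
    simpa using congrFun h0 k
  · rw [hA.mulVec_eigenvectorBasis i]
    ext k
    simp

end tensors

/-- **Lieb's inequalities.** For every half-integer `S ≥ 1/2` and every finite
undirected graph `G` with nonnegative edge weights,
`((S+1)/S)² · CHA(G) ≤ QHA_S(G) ≤ CHA(G)`, where `QHA_S(G)` is the smallest eigenvalue of
the spin-`S` Heisenberg antiferromagnet and `CHA(G)` is the classical Heisenberg value. -/
theorem lieb_inequalities (n : ℕ) (hn : 1 ≤ n) {V : Type*} [Fintype V] [DecidableEq V]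
    (w : V → V → ℝ) (hsymm : ∀ i j, w i j = w j i) (hnn : ∀ i j, 0 ≤ w i j)
    (hloop : ∀ i, w i i = 0) :
    ((spinVal n + 1) / spinVal n) ^ 2 * chaVal w ≤ minEig (hQHA n w)
      ∧ minEig (hQHA n w) ≤ chaVal w := by
  have hA := hQHA_herm (n := n) w hsymm
  have hlow : ∀ r ∈ {r : ℝ | ∃ v : (V → Fin (n+1)) → ℂ, v ≠ 0 ∧
      (hQHA n w).mulVec v = (r : ℂ) • v},
      ((spinVal n + 1) / spinVal n) ^ 2 * chaVal w ≤ r := by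
    rintro r ⟨v, hv, hr⟩
    exact lower_eig hn w hloop r v hv hr
  refine ⟨le_csInf (eig_nonempty _ hA) hlow, ?_⟩
  refine le_csInf ⟨_, fun _ => EuclideanSpace.single 0 1, fun i => by simp, rfl⟩ ?_
  rintro x ⟨Ω, hΩ, rfl⟩
  obtain ⟨ψ, h1, h2⟩ := upper_quad hn w hloop Ω hΩ
  exact rayleigh _ hA ⟨_, hlow⟩ ψ h1 _ h2

end
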